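/- For every m ≥ 5, the cover array of the Fibonacci string Fib_m contains exactly 2m − 4 distinct values; that is, the set {Cov_Fib[ℓ] : 1 ≤ ℓ ≤ F_m} has cardinality 2m − 4. In particular, the number of distinct values in the cover array of Fib_m is Θ(m) = Θ(log F_m). -/

import Mathlib

section Defs

variable {α : Type*}

/-- `C` occurs in `T` at starting position `i`. -/
def OccursAt (C T : List α) (i : ℕ) : Prop :=
  i + C.length ≤ T.length ∧ (T.drop i).take C.length = C

/-- `C` is a cover of `T`: `C` occurs in `T` and every position of `T`
lies within an occurrence of `C`. -/
def IsCover (C T : List α) : Prop :=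
  (∃ i, OccursAt C T i) ∧
    ∀ q, q < T.length → ∃ i, OccursAt C T i ∧ i ≤ q ∧ q < i + C.length

/-- A border of `T` is both a prefix and a suffix of `T`. -/
def IsBorder (B T : List α) : Prop := B <+: T ∧ B <:+ T

/-- `p` is a period of `U`: `U[i] = U[i+p]` for all `0 ≤ i < |U| - p`. -/
def IsPeriod (p : ℕ) (U : List α) : Prop :=
  0 < p ∧ ∀ i, i + p < U.length → U[i]? = U[i + p]?

/-- `U` is aperiodic: its smallest period `p` satisfies `2p > |U|`
(equivalently, every period `p` of `U` satisfies `2p > |U|`). -/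
def StrAperiodic (U : List α) : Prop := ∀ p, IsPeriod p U → U.length < 2 * p

/-- A nonempty string `X` is primitive if `X = Y^t` implies `t = 1`. -/
def StrPrimitive (X : List α) : Prop :=
  X ≠ [] ∧ ∀ (Y : List α) (t : ℕ), X = (List.replicate t Y).flatten → t = 1

/-- A string is superprimitive if it has no proper cover. -/
def Superprimitive (T : List α) : Prop :=
  ¬ ∃ C : List α, IsCover C T ∧ C.length < T.length

/-- The length of the shortest cover of `T`. -/
noncomputable def covLen (T : List α) : ℕ :=
  sInf {c | ∃ C : List α, C.length = c ∧ IsCover C T}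

/-- `{a, a+p, ..., a+(t-1)p}` is a maximal arithmetic progression with
difference `p` inside the set `S`. -/
def MaxProg (S : Set ℕ) (p a t : ℕ) : Prop :=
  0 < t ∧ (∀ r, r < t → a + r * p ∈ S) ∧ (∀ b, b + p = a → b ∉ S) ∧ a + t * p ∉ S

end Defs

/-- Fibonacci strings over `Bool` (`true` = a, `false` = b):
`Fib_0 = b`, `Fib_1 = a`, `Fib_m = Fib_{m-1} Fib_{m-2}`. -/
def fibWord : ℕ → List Bool
  | 0 => [false]
  | 1 => [true]
  | (m + 2) => fibWord (m + 1) ++ fibWord m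

/-- Fibonacci numbers `F_k = |Fib_k|`: `F_0 = F_1 = 1`, `F_2 = 2`, `F_3 = 3`, ... -/
def F (k : ℕ) : ℕ := (fibWord k).length

/-- The `n`-th letter of the infinite Fibonacci word (each `Fib_m`, `m ≥ 1`,
is a prefix of the infinite word, and `F_{n+2} > n`). -/
def fibInf (n : ℕ) : Bool := (fibWord (n + 2)).getD n false

/-- The length-`ℓ` prefix `Fib[0..ℓ)` of the infinite Fibonacci word. -/
def fibPrefix (ℓ : ℕ) : List Bool := (List.range ℓ).map fibInf

/-- `Cov_Fib[ℓ]`: the length of the shortest cover of `Fib[0..ℓ)`. -/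
noncomputable def covFib (ℓ : ℕ) : ℕ := covLen (fibPrefix ℓ)

/-!
The prefix `Fib[0..F_{j+2}-2)` has period `F_j`, while by a Euclid-type descent on periods no
period of `Fib[0..F_{j+1}-1)` is smaller than `F_j`. Two consequences: the borders of
`Fib[0..F_k-1)` all have some length `F_j - 1`, and so do the proper borders of
`Fib[0..2F_k-1)`; and `Fib[0..F_j-1)` never covers a longer prefix, because covering position
`F_j - 1` would need an occurrence at some `0 < i < F_j`, making `i` a period that is too small.
A cover is a border, so the prefixes of lengths `F_k - 1` and `2F_k - 1` are superprimitive.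
For every other length `l`, say `F_{n+2} ≤ l ≤ F_{n+3} - 2`, the border of length `l - F_{n+1}`
is a cover. The values of the cover array are exactly the superprimitive lengths, since a shortest
cover of a prefix is itself a superprimitive prefix.
-/

section Covers

variable {α : Type*} {A B C T : List α} {i j p q c : ℕ}

theorem occursAt_iff_exists_append :
    OccursAt C T i ↔ ∃ L R, L.length = i ∧ L ++ C ++ R = T := by
  constructor
  · rintro ⟨hi, hC⟩
    refine ⟨T.take i, (T.drop i).drop C.length, List.length_take_of_le (by lia), ?_⟩
    nth_rw 1 [← hC]
    rw [List.append_assoc, List.take_append_drop, List.take_append_drop]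
  · rintro ⟨L, R, rfl, rfl⟩
    simp [OccursAt]

theorem occursAt_zero_iff : OccursAt C T 0 ↔ C <+: T := by
  simp [occursAt_iff_exists_append, List.IsPrefix]

theorem OccursAt.trans (hA : OccursAt A B i) (hB : OccursAt B T j) : OccursAt A T (j + i) := by
  obtain ⟨L, R, rfl, rfl⟩ := occursAt_iff_exists_append.1 hA
  obtain ⟨L', R', rfl, rfl⟩ := occursAt_iff_exists_append.1 hB
  exact occursAt_iff_exists_append.2 ⟨L' ++ L, R ++ R', by simp, by simp⟩

theorem OccursAt.of_prefix (h : OccursAt C A i) (hA : A <+: T) : OccursAt C T i := by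
  simpa using h.trans (occursAt_zero_iff.2 hA)

theorem OccursAt.isSuffix (h : OccursAt C T i) (hi : T.length ≤ i + C.length) : C <:+ T := by
  obtain ⟨L, R, rfl, rfl⟩ := occursAt_iff_exists_append.1 h
  obtain rfl : R = [] := by
    rw [List.length_append, List.length_append] at hi
    exact List.eq_nil_of_length_eq_zero (by lia)
  exact ⟨L, by simp⟩

theorem occursAt_of_isSuffix (h : C <:+ T) : OccursAt C T (T.length - C.length) := by
  obtain ⟨L, rfl⟩ := h
  exact occursAt_iff_exists_append.2 ⟨L, [], by simp, by simp⟩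

theorem OccursAt.getElem? (h : OccursAt C T i) (hj : j < C.length) : T[j + i]? = C[j]? := by
  obtain ⟨L, R, rfl, rfl⟩ := occursAt_iff_exists_append.1 h
  rw [List.append_assoc, List.getElem?_append_right (by lia), Nat.add_sub_cancel,
    List.getElem?_append_left hj]

theorem OccursAt.isPeriod_take (h : OccursAt C T i) (hC : C <+: T) (hi : 0 < i) :
    IsPeriod i (T.take (i + C.length)) := by
  refine ⟨hi, fun j hj => ?_⟩
  have hjC : j < C.length := by rw [List.length_take] at hj; lia
  rw [List.getElem?_take_of_lt (by lia), List.getElem?_take_of_lt (by lia), h.getElem? hjC]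
  exact (occursAt_zero_iff.2 hC).getElem? hjC

theorem IsPeriod.of_prefix (h : IsPeriod p T) (hA : A <+: T) : IsPeriod p A := by
  obtain ⟨R, rfl⟩ := hA
  refine ⟨h.1, fun j hj => ?_⟩
  have := h.2 j (by rw [List.length_append]; lia)
  rwa [List.getElem?_append_left (by lia), List.getElem?_append_left hj] at this

theorem IsPeriod.sub (hp : IsPeriod p T) (hq : IsPeriod q T) (hqp : q < p) :
    IsPeriod (p - q) (T.take (T.length - q)) := by
  refine ⟨by lia, fun j hj => ?_⟩
  rw [List.length_take] at hj
  rw [List.getElem?_take_of_lt (by lia), List.getElem?_take_of_lt (by lia),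
    hp.2 j (by lia), hq.2 (j + (p - q)) (by lia)]
  congr 1
  lia

theorem IsPeriod.take_eq_drop (h : IsPeriod p T) : T.take (T.length - p) = T.drop p := by
  refine List.ext_getElem (by simp) fun j hj _ => ?_
  rw [List.length_take] at hj
  have hT := h.2 j (by lia)
  rw [List.getElem?_eq_getElem (by lia), List.getElem?_eq_getElem (by lia)] at hT
  simpa [add_comm] using hT

theorem IsPeriod.isBorder_take (h : IsPeriod p T) : IsBorder (T.take (T.length - p)) T :=
  ⟨List.take_prefix _ _, h.take_eq_drop ▸ List.drop_suffix _ _⟩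

theorem IsPeriod.occursAt_take (h : IsPeriod p T) (hc : p + c ≤ T.length) :
    OccursAt (T.take c) T p := by
  have hlen : (T.take c).length = c := List.length_take_of_le (by lia)
  refine ⟨by lia, ?_⟩
  rw [hlen, ← h.take_eq_drop, List.take_take, min_eq_left (by lia)]

theorem IsBorder.isPeriod (h : IsBorder B T) (hlt : B.length < T.length) :
    IsPeriod (T.length - B.length) T := by
  simpa [Nat.sub_add_cancel hlt.le] using
    (occursAt_of_isSuffix h.2).isPeriod_take h.1 (Nat.sub_pos_of_lt hlt)

theorem IsBorder.of_length_le (hB : IsBorder B T) (hC : IsBorder C T)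
    (hle : B.length ≤ C.length) : IsBorder B C :=
  ⟨List.prefix_of_prefix_length_le hB.1 hC.1 hle, List.suffix_of_suffix_length_le hB.2 hC.2 hle⟩

theorem IsCover.refl (T : List α) : IsCover T T :=
  have h : OccursAt T T 0 := occursAt_zero_iff.2 (List.prefix_refl T)
  ⟨⟨0, h⟩, fun _ hq => ⟨0, h, Nat.zero_le _, by lia⟩⟩

theorem IsCover.trans (hA : IsCover A B) (hB : IsCover B T) : IsCover A T := by
  refine ⟨?_, fun q hq => ?_⟩
  · obtain ⟨⟨i, hi⟩, j, hj⟩ := hA.1, hB.1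
    exact ⟨j + i, hi.trans hj⟩
  · obtain ⟨j, hj, hjq, hqj⟩ := hB.2 q hq
    obtain ⟨i, hi, hiq, hqi⟩ := hA.2 (q - j) (by lia)
    exact ⟨j + i, hi.trans hj, by lia, by lia⟩

theorem IsCover.length_le (h : IsCover C T) : C.length ≤ T.length := by
  obtain ⟨i, hi, -⟩ := h.1
  lia

theorem IsCover.length_pos (h : IsCover C T) (hT : 0 < T.length) : 0 < C.length := by
  obtain ⟨i, -, hi, hi'⟩ := h.2 0 hT
  lia

theorem IsCover.isBorder (h : IsCover C T) : IsBorder C T := by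
  rcases Nat.eq_zero_or_pos T.length with hT | hT
  · obtain rfl := List.eq_nil_of_length_eq_zero (Nat.le_zero.1 (hT ▸ h.length_le))
    exact ⟨List.nil_prefix, List.nil_suffix⟩
  · obtain ⟨i, hi, hi0, -⟩ := h.2 0 hT
    obtain ⟨j, hj, -, hTj⟩ := h.2 (T.length - 1) (by lia)
    obtain rfl : i = 0 := Nat.le_zero.1 hi0
    exact ⟨occursAt_zero_iff.1 hi, hj.isSuffix (by lia)⟩

theorem isCover_of_occursAt (hC : C <+: T) (hi : OccursAt C T i) (hj : OccursAt C T j)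
    (hiC : i ≤ C.length) (hji : j ≤ i + C.length) (hTj : T.length ≤ j + C.length) :
    IsCover C T := by
  have h0 : OccursAt C T 0 := occursAt_zero_iff.2 hC
  refine ⟨⟨0, h0⟩, fun q hq => ?_⟩
  rcases lt_or_ge q C.length with hq0 | hq0
  · exact ⟨0, h0, by lia, by lia⟩
  · rcases lt_or_ge q j with hqj | hqj
    · exact ⟨i, hi, by lia, by lia⟩
    · exact ⟨j, hj, by lia, by lia⟩

theorem IsPeriod.isCover_take (h : IsPeriod p T) (hp : 2 * p ≤ T.length) :
    IsCover (T.take (T.length - p)) T := by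
  have hlen : (T.take (T.length - p)).length = T.length - p := List.length_take_of_le (by lia)
  have hocc := h.occursAt_take (c := T.length - p) (by lia)
  exact isCover_of_occursAt (List.take_prefix _ _) hocc hocc (by lia) (by lia) (by lia)

theorem Superprimitive.strAperiodic (h : Superprimitive T) : StrAperiodic T := by
  intro p hp
  by_contra! hle
  have hpos := hp.1
  exact h ⟨_, hp.isCover_take hle, by rw [List.length_take]; lia⟩

theorem exists_isCover_length_eq_covLen (T : List α) : ∃ C, C.length = covLen T ∧ IsCover C T :=
  Nat.sInf_mem (s := {c | ∃ C : List α, C.length = c ∧ IsCover C T}) ⟨_, T, rfl, .refl T⟩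

theorem IsCover.covLen_le (h : IsCover C T) : covLen T ≤ C.length :=
  Nat.sInf_le ⟨C, rfl, h⟩

theorem IsCover.superprimitive (h : IsCover C T) (hC : C.length = covLen T) :
    Superprimitive C := by
  rintro ⟨A, hA, hlt⟩
  have := (hA.trans h).covLen_le
  lia

theorem Superprimitive.covLen_eq (h : Superprimitive T) : covLen T = T.length := by
  obtain ⟨C, hlen, hC⟩ := exists_isCover_length_eq_covLen T
  by_contra hne
  exact h ⟨C, hC, by have := hC.length_le; lia⟩

end Covers

section Lengths

variable {a b k : ℕ}

theorem F_add_two (k : ℕ) : F (k + 2) = F (k + 1) + F k := by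
  simp [F, fibWord]

theorem F_eq_fib : ∀ k, F k = Nat.fib (k + 1)
  | 0 | 1 => rfl
  | k + 2 => by rw [F_add_two, F_eq_fib (k + 1), F_eq_fib k, Nat.fib_add_two (n := k + 1), add_comm]

theorem F_pos (k : ℕ) : 0 < F k := by
  simp [F_eq_fib]

theorem F_mono : Monotone F := fun a b h => by
  simpa only [F_eq_fib] using Nat.fib_mono (Nat.succ_le_succ h)

theorem F_lt_F_iff (ha : 1 ≤ a) : F a < F b ↔ a < b := by
  rw [F_eq_fib, F_eq_fib, Nat.fib_lt_fib (by lia), Nat.add_lt_add_iff_right]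

theorem F_strictMonoOn : StrictMonoOn F (Set.Ici 1) :=
  fun _ ha _ _ hab => (F_lt_F_iff ha).2 hab

theorem two_le_F_iff : 2 ≤ F k ↔ 2 ≤ k :=
  F_lt_F_iff (a := 1) le_rfl

theorem F_succ_le_two_mul (k : ℕ) : F (k + 1) ≤ 2 * F k := by
  cases k with
  | zero => decide
  | succ k =>
    have : F k ≤ F (k + 1) := F_mono k.le_succ
    rw [F_add_two]
    lia

theorem F_le_F_add_one_iff (hb : 3 ≤ b) : F a ≤ F b + 1 ↔ a ≤ b := by
  refine ⟨fun h => ?_, fun h => (F_mono h).trans (Nat.le_succ _)⟩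
  obtain ⟨n, rfl⟩ := Nat.exists_eq_add_of_le' hb
  have h₂ : 2 ≤ F (n + 2) := two_le_F_iff.2 (by lia)
  have h₄ : F (n + 4) = F (n + 3) + F (n + 2) := F_add_two (n + 2)
  by_contra! hlt
  have : F (n + 4) ≤ F a := F_mono hlt
  lia

theorem two_mul_F_le_F_add_two_add_one_iff (hb : 3 ≤ b) : 2 * F a ≤ F (b + 2) + 1 ↔ a ≤ b := by
  have hrec := F_add_two b
  constructor
  · intro h
    obtain ⟨n, rfl⟩ := Nat.exists_eq_add_of_le' hb
    have h₂ : 2 ≤ F (n + 2) := two_le_F_iff.2 (by lia)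
    have h₄ : F (n + 4) = F (n + 3) + F (n + 2) := F_add_two (n + 2)
    by_contra! hlt
    have : F (n + 4) ≤ F a := F_mono hlt
    lia
  · intro h
    have h₁ : F a ≤ F b := F_mono h
    have h₂ : F b ≤ F (b + 1) := F_mono b.le_succ
    lia

theorem F_sub_one_injOn : Set.InjOn (fun k => F k - 1) (Set.Ici 1) := fun a ha b hb hab => by
  have := F_pos a
  have := F_pos b
  exact F_strictMonoOn.injOn ha hb (by lia)

theorem two_mul_F_sub_one_injOn : Set.InjOn (fun k => 2 * F k - 1) (Set.Ici 1) :=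
  fun a ha b hb hab => by
    have := F_pos a
    have := F_pos b
    exact F_strictMonoOn.injOn ha hb (by lia)

theorem exists_F_le_lt_F_succ (l : ℕ) : ∃ k, F k ≤ l + 1 ∧ l + 1 < F (k + 1) := by
  obtain ⟨k, hk⟩ := Nat.exists_eq_succ_of_ne_zero (Nat.greatestFib_ne_zero.2 l.succ_ne_zero)
  have hle := Nat.fib_greatestFib_le (l + 1)
  have hlt := Nat.lt_fib_greatestFib_add_one (l + 1)
  rw [hk] at hle hlt
  exact ⟨k, by rwa [F_eq_fib], by rwa [F_eq_fib]⟩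

theorem F_ne_two_mul_F (hb : 2 ≤ b) : F a ≠ 2 * F b := by
  obtain ⟨b, rfl⟩ := Nat.exists_eq_add_of_le' hb
  have h₁ : F (b + 1) < F (b + 2) := (F_lt_F_iff (by lia)).2 (by lia)
  have h₂ : F (b + 2) < F (b + 3) := (F_lt_F_iff (by lia)).2 (by lia)
  have h₃ : F (b + 3) = F (b + 2) + F (b + 1) := F_add_two _
  have h₄ : F (b + 4) = F (b + 3) + F (b + 2) := F_add_two _
  rcases lt_or_ge a (b + 4) with ha | ha
  · have := F_mono (Nat.le_of_lt_succ ha)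
    lia
  · have := F_mono ha
    lia

end Lengths

section FibPrefix

variable {C : List Bool} {c i l m p : ℕ}

@[simp]
theorem length_fibPrefix (l : ℕ) : (fibPrefix l).length = l := by
  simp [fibPrefix]

theorem take_fibPrefix (h : c ≤ l) : (fibPrefix l).take c = fibPrefix c := by
  rw [fibPrefix, ← List.map_take, List.take_range, min_eq_left h, fibPrefix]

theorem fibPrefix_isPrefix (h : c ≤ l) : fibPrefix c <+: fibPrefix l :=
  take_fibPrefix h ▸ List.take_prefix c _

theorem eq_fibPrefix_of_isPrefix (h : C <+: fibPrefix l) : C = fibPrefix C.length := by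
  have hle : C.length ≤ l := by simpa using h.length_le
  rw [← take_fibPrefix hle]
  exact List.prefix_iff_eq_take.1 h

theorem getElem?_fibPrefix (h : i < l) : (fibPrefix l)[i]? = some (fibInf i) := by
  simp [fibPrefix, h]

theorem isPeriod_fibPrefix_iff :
    IsPeriod p (fibPrefix l) ↔ 0 < p ∧ ∀ i, i + p < l → fibInf (i + p) = fibInf i := by
  simp only [IsPeriod, length_fibPrefix]
  refine and_congr_right fun _ => forall₂_congr fun i hi => ?_
  rw [getElem?_fibPrefix hi, getElem?_fibPrefix (by lia), Option.some_inj, eq_comm]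

theorem IsPeriod.fibPrefix_of_le (h : IsPeriod p (fibPrefix l)) (hcl : c ≤ l) :
    IsPeriod p (fibPrefix c) :=
  h.of_prefix (fibPrefix_isPrefix hcl)

theorem fibWord_isPrefix (hc : 1 ≤ c) (hcm : c ≤ m) : fibWord c <+: fibWord m := by
  induction m, hcm using Nat.le_induction with
  | base => exact List.prefix_refl _
  | succ m hcm ih =>
    obtain ⟨m, rfl⟩ := Nat.exists_eq_add_of_le' (hc.trans hcm)
    exact ih.trans (List.prefix_append _ _)

theorem fibPrefix_F (hm : 1 ≤ m) : fibPrefix (F m) = fibWord m := by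
  refine List.ext_getElem (by simp [F]) fun i _ hi => ?_
  have hi' : i < F (i + 2) := by
    rw [F_eq_fib]
    exact Nat.fib_add_two_strictMono.le_apply (x := i + 1)
  simp only [fibPrefix, List.getElem_map, List.getElem_range, fibInf, List.getD_eq_getElem _ _ hi']
  rcases le_total (i + 2) m with h | h
  · exact (fibWord_isPrefix (by lia) h).getElem hi'
  · exact ((fibWord_isPrefix hm h).getElem hi).symm

theorem fibInf_add_F (hm : 1 ≤ m) (hi : i < F m) : fibInf (i + F (m + 1)) = fibInf i := by
  have hrec := F_add_two m
  have hocc : OccursAt (fibPrefix (F m)) (fibPrefix (F (m + 2))) (F (m + 1)) := by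
    rw [fibPrefix_F hm, fibPrefix_F (by lia), fibWord]
    exact occursAt_iff_exists_append.2 ⟨_, [], rfl, by simp⟩
  have hletter := hocc.getElem? (j := i) (by simpa)
  rwa [getElem?_fibPrefix hi, getElem?_fibPrefix (by lia), Option.some_inj] at hletter

theorem isPeriod_fibPrefix_F (m : ℕ) : IsPeriod (F m) (fibPrefix (F (m + 2) - 2)) := by
  refine isPeriod_fibPrefix_iff.2 ⟨F_pos m, ?_⟩
  induction m with
  | zero => exact fun i hi => absurd hi (by simp [F, fibWord])
  | succ m ih =>
    intro i hi
    change i + F (m + 1) < F (m + 3) - 2 at hi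
    have h₀ := F_add_two m
    have h₁ : F (m + 3) = F (m + 2) + F (m + 1) := F_add_two (m + 1)
    rcases m.eq_zero_or_pos with rfl | hm
    · exact absurd hi (by simp [F, fibWord])
    · rcases lt_or_ge i (F m) with him | him
      · exact fibInf_add_F hm him
      · obtain ⟨s, rfl⟩ := Nat.exists_eq_add_of_le' him
        calc fibInf (s + F m + F (m + 1))
            = fibInf (s + F (m + 2)) := by congr 1; lia
          _ = fibInf s := fibInf_add_F (by lia) (by lia)
          _ = fibInf (s + F m) := (ih s (by lia)).symm

theorem fibInf_F_sub_two_ne (m : ℕ) : fibInf (F (m + 3) - 2) ≠ fibInf (F (m + 2) - 2) := by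
  induction m with
  | zero => decide
  | succ m ih =>
    have h₂ : 2 ≤ F (m + 2) := two_le_F_iff.2 (by lia)
    have h₄ : F (m + 4) = F (m + 3) + F (m + 2) := F_add_two (m + 2)
    change fibInf (F (m + 4) - 2) ≠ fibInf (F (m + 3) - 2)
    rw [show F (m + 4) - 2 = F (m + 2) - 2 + F (m + 3) by lia,
      fibInf_add_F (by lia) (by lia)]
    exact ih.symm

theorem not_isPeriod_fibPrefix_F (m : ℕ) :
    ¬ IsPeriod (F (m + 1)) (fibPrefix (F (m + 3) - 1)) := by
  intro h
  have h₂ : 2 ≤ F (m + 2) := two_le_F_iff.2 (by lia)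
  have h₃ : F (m + 3) = F (m + 2) + F (m + 1) := F_add_two (m + 1)
  apply fibInf_F_sub_two_ne m
  rw [show F (m + 3) - 2 = F (m + 2) - 2 + F (m + 1) by lia]
  exact (isPeriod_fibPrefix_iff.1 h).2 _ (by lia)

theorem F_le_of_isPeriod_fibPrefix :
    ∀ {m p : ℕ}, IsPeriod p (fibPrefix (F (m + 1) - 1)) → F m ≤ p
  | 0, _, h | 1, _, h => h.1
  | m + 2, p, h => by
    change IsPeriod p (fibPrefix (F (m + 3) - 1)) at h
    have hF := F_pos m
    have h₂ := F_add_two m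
    have h₃ : F (m + 3) = F (m + 2) + F (m + 1) := F_add_two (m + 1)
    by_contra! hlt
    rcases lt_trichotomy p (F (m + 1)) with hp | rfl | hp
    · exact hp.not_ge (F_le_of_isPeriod_fibPrefix (h.fibPrefix_of_le (by lia)))
    · exact not_isPeriod_fibPrefix_F m h
    · have hsub : IsPeriod (p - F (m + 1)) (fibPrefix (F (m + 3) - 2 - F (m + 1))) := by
        have h' := (h.fibPrefix_of_le (Nat.sub_le_sub_left one_le_two _)).sub
          (isPeriod_fibPrefix_F (m + 1)) hp
        rwa [length_fibPrefix, take_fibPrefix (Nat.sub_le _ _)] at h'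
      have := F_le_of_isPeriod_fibPrefix (hsub.fibPrefix_of_le (c := F (m + 1) - 1) (by lia))
      lia

theorem IsBorder.fibPrefix_sub_F (h : IsBorder C (fibPrefix l)) (hC : C.length < l)
    (hml : F (m + 1) ≤ l + 1) (hlm : l + 2 ≤ F (m + 2)) : IsBorder C (fibPrefix (l - F m)) := by
  have hshort : F m ≤ l - C.length := by
    have hper := h.isPeriod (by simpa)
    rw [length_fibPrefix] at hper
    exact F_le_of_isPeriod_fibPrefix (hper.fibPrefix_of_le (by lia))
  have hlong : IsBorder (fibPrefix (l - F m)) (fibPrefix l) := by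
    have hper := (isPeriod_fibPrefix_F m).fibPrefix_of_le (c := l) (by lia)
    simpa [take_fibPrefix] using hper.isBorder_take
  exact h.of_length_le hlong (by rw [length_fibPrefix]; lia)

theorem IsBorder.exists_length_eq_F_sub_one :
    ∀ {k : ℕ}, IsBorder C (fibPrefix (F k - 1)) → ∃ j, C.length = F j - 1
  | 0, h | 1, h => ⟨0, Nat.le_zero.1 (by simpa [F, fibWord] using h.1.length_le)⟩
  | k + 2, h => by
    have hle : C.length ≤ F (k + 2) - 1 := by simpa using h.1.length_le
    rcases hle.eq_or_lt with hC | hC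
    · exact ⟨k + 2, hC⟩
    · have h₁ := F_pos (k + 1)
      have h₂ := F_add_two k
      have h₃ : F (k + 3) = F (k + 2) + F (k + 1) := F_add_two (k + 1)
      have h' : IsBorder C (fibPrefix (F (k + 2) - 1 - F (k + 1))) :=
        h.fibPrefix_sub_F hC (by lia) (by lia)
      rw [show F (k + 2) - 1 - F (k + 1) = F k - 1 by lia] at h'
      exact h'.exists_length_eq_F_sub_one

theorem not_isCover_fibPrefix_F_sub_one (hl : F m ≤ l) :
    ¬ IsCover (fibPrefix (F m - 1)) (fibPrefix l) := by
  intro h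
  obtain ⟨i, hi, him, hmi⟩ := h.2 (F m - 1) (by rw [length_fibPrefix]; have := F_pos m; lia)
  rw [length_fibPrefix] at hmi
  have hil : i + (F m - 1) ≤ l := by simpa using hi.1
  have hper : IsPeriod i (fibPrefix (i + (F m - 1))) := by
    simpa [take_fibPrefix hil] using hi.isPeriod_take h.isBorder.1 (by lia)
  obtain ⟨n, rfl⟩ := Nat.exists_eq_add_of_le' (two_le_F_iff.1 (show 2 ≤ F m by lia))
  have h₂ := F_add_two n
  have h₃ : F (n + 3) = F (n + 2) + F (n + 1) := F_add_two (n + 1)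
  have hi₁ : F (n + 1) ≤ i := F_le_of_isPeriod_fibPrefix (hper.fibPrefix_of_le (by lia))
  have hi₂ : F (n + 2) ≤ i := F_le_of_isPeriod_fibPrefix (hper.fibPrefix_of_le (by lia))
  lia

theorem superprimitive_fibPrefix_of_forall_isBorder
    (h : ∀ B, IsBorder B (fibPrefix l) → B.length < l → ∃ j, B.length = F j - 1) :
    Superprimitive (fibPrefix l) := by
  rintro ⟨C, hC, hlt⟩
  rw [length_fibPrefix] at hlt
  obtain ⟨j, hj⟩ := h C hC.isBorder hlt
  rw [eq_fibPrefix_of_isPrefix hC.isBorder.1, hj] at hC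
  exact not_isCover_fibPrefix_F_sub_one (by lia) hC

theorem superprimitive_fibPrefix_F_sub_one (k : ℕ) : Superprimitive (fibPrefix (F k - 1)) :=
  superprimitive_fibPrefix_of_forall_isBorder fun _ hB _ => hB.exists_length_eq_F_sub_one

theorem superprimitive_fibPrefix_two_mul_F_sub_one (k : ℕ) :
    Superprimitive (fibPrefix (2 * F (k + 1) - 1)) := by
  refine superprimitive_fibPrefix_of_forall_isBorder fun B hB hlt => ?_
  have h₁ : F (k + 2) ≤ 2 * F (k + 1) := F_succ_le_two_mul (k + 1)
  have h₂ : F (k + 1) < F (k + 2) := (F_lt_F_iff (by lia)).2 (by lia)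
  have h₃ : F (k + 3) = F (k + 2) + F (k + 1) := F_add_two (k + 1)
  have hB' : IsBorder B (fibPrefix (2 * F (k + 1) - 1 - F (k + 1))) :=
    hB.fibPrefix_sub_F hlt (by lia) (by lia)
  rw [show 2 * F (k + 1) - 1 - F (k + 1) = F (k + 1) - 1 by lia] at hB'
  exact hB'.exists_length_eq_F_sub_one

theorem occursAt_fibPrefix_F (hc : F m + c ≤ l) (hcm : F m + c + 2 ≤ F (m + 2)) :
    OccursAt (fibPrefix c) (fibPrefix l) (F m) := by
  have hper := (isPeriod_fibPrefix_F m).fibPrefix_of_le (c := F m + c) (by lia)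
  have hocc := hper.occursAt_take (c := c) (by simp)
  rw [take_fibPrefix (Nat.le_add_left _ _)] at hocc
  exact hocc.of_prefix (fibPrefix_isPrefix hc)

theorem isCover_fibPrefix_sub_F (n : ℕ) (hnl : F (n + 2) ≤ l) (hln : l + 2 ≤ 2 * F (n + 1)) :
    IsCover (fibPrefix (l - F (n + 1))) (fibPrefix l) := by
  have h₁ := F_succ_le_two_mul n
  have h₂ := F_add_two n
  have h₃ : F (n + 3) = F (n + 2) + F (n + 1) := F_add_two (n + 1)
  refine isCover_of_occursAt (fibPrefix_isPrefix (Nat.sub_le _ _))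
    (occursAt_fibPrefix_F (m := n) (by lia) (by lia))
    (occursAt_fibPrefix_F (m := n + 1) (by lia) (by lia)) ?_ ?_ ?_
  all_goals simp only [length_fibPrefix]; lia

theorem Superprimitive.exists_eq_F_sub_one_or (h : Superprimitive (fibPrefix l)) :
    ∃ k, l = F k - 1 ∨ l = 2 * F k - 1 := by
  obtain ⟨k, hkl, hlk⟩ := exists_F_le_lt_F_succ l
  by_contra! hne
  have hk := (hne k).1
  rcases k with _ | _ | n
  · change l + 1 < 1 at hlk
    lia
  · change l + 1 < 2 at hlk
    change l ≠ 0 at hk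
    lia
  change l + 1 < F (n + 3) at hlk
  change l ≠ F (n + 2) - 1 at hk
  have h₁ := F_pos (n + 1)
  have h₃ : F (n + 3) = F (n + 2) + F (n + 1) := F_add_two (n + 1)
  have hshort : l < 2 * F (n + 1) := by
    simpa using h.strAperiodic _ ((isPeriod_fibPrefix_F (n + 1)).fibPrefix_of_le (by lia))
  have hne₂ := (hne (n + 1)).2
  exact h ⟨_, isCover_fibPrefix_sub_F n (by lia) (by lia), by simp only [length_fibPrefix]; lia⟩

theorem superprimitive_fibPrefix_iff :
    Superprimitive (fibPrefix l) ↔ ∃ k, l = F k - 1 ∨ l = 2 * F k - 1 := by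
  refine ⟨Superprimitive.exists_eq_F_sub_one_or, ?_⟩
  rintro ⟨k, rfl | rfl⟩
  · exact superprimitive_fibPrefix_F_sub_one k
  · cases k with
    | zero => exact superprimitive_fibPrefix_F_sub_one 2
    | succ k => exact superprimitive_fibPrefix_two_mul_F_sub_one k

end FibPrefix

section CoverArray

theorem mem_image_covFib_iff {n v : ℕ} :
    v ∈ (Finset.Icc 1 n).image covFib ↔ v ∈ Finset.Icc 1 n ∧ Superprimitive (fibPrefix v) := by
  simp only [Finset.mem_image, Finset.mem_Icc]
  constructor
  · rintro ⟨l, ⟨hl, hln⟩, rfl⟩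
    obtain ⟨C, hlen, hC⟩ := exists_isCover_length_eq_covLen (fibPrefix l)
    have hpos := hC.length_pos (by simpa)
    have hle : C.length ≤ l := by simpa using hC.length_le
    refine ⟨by rw [covFib]; lia, ?_⟩
    rw [covFib, ← hlen, ← eq_fibPrefix_of_isPrefix hC.isBorder.1]
    exact hC.superprimitive hlen
  · rintro ⟨hv, hsup⟩
    exact ⟨v, hv, by rw [covFib, hsup.covLen_eq, length_fibPrefix]⟩

theorem image_covFib_Icc_F {m : ℕ} (hm : 3 ≤ m) :
    (Finset.Icc 1 (F (m + 2))).image covFib =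
      (Finset.Icc 2 (m + 2)).image (fun k => F k - 1) ∪
        (Finset.Icc 2 m).image (fun k => 2 * F k - 1) := by
  ext v
  rw [mem_image_covFib_iff, superprimitive_fibPrefix_iff]
  simp only [Finset.mem_union, Finset.mem_image, Finset.mem_Icc]
  constructor
  · rintro ⟨⟨hv, hvm⟩, k, rfl | rfl⟩
    · have h₂ : 2 ≤ k := two_le_F_iff.1 (by lia)
      have hkm : k ≤ m + 2 := (F_le_F_add_one_iff (by lia)).1 (by lia)
      exact Or.inl ⟨k, ⟨h₂, hkm⟩, rfl⟩
    · have hkm : k ≤ m := (two_mul_F_le_F_add_two_add_one_iff hm).1 (by lia)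
      rcases k with _ | _ | k
      · exact Or.inl ⟨2, by lia, rfl⟩
      · exact Or.inl ⟨2, by lia, rfl⟩
      · exact Or.inr ⟨k + 2, by lia, rfl⟩
  · rintro (⟨k, ⟨hk, hkm⟩, rfl⟩ | ⟨k, ⟨hk, hkm⟩, rfl⟩)
    · have h₂ := two_le_F_iff.2 hk
      have hkm' : F k ≤ F (m + 2) := F_mono hkm
      exact ⟨by lia, k, Or.inl rfl⟩
    · have h₂ := two_le_F_iff.2 hk
      have hkm' := (two_mul_F_le_F_add_two_add_one_iff hm).2 hkm
      exact ⟨by lia, k, Or.inr rfl⟩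

theorem disjoint_image_F_sub_one_image_two_mul_F_sub_one (s : Finset ℕ) (n : ℕ) :
    Disjoint (s.image fun k => F k - 1) ((Finset.Icc 2 n).image fun k => 2 * F k - 1) := by
  simp only [Finset.disjoint_left, Finset.mem_image, Finset.mem_Icc]
  rintro _ ⟨a, -, rfl⟩ ⟨b, ⟨hb, -⟩, hab⟩
  have ha' := F_pos a
  have hb' := F_pos b
  exact F_ne_two_mul_F (a := a) hb (by lia)

end CoverArray

/-- For every `m ≥ 5`, the cover array `Cov_Fib[1], ..., Cov_Fib[F_m]` of the
Fibonacci string `Fib_m` contains exactly `2m - 4` distinct values. -/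
theorem stmt12 (m : ℕ) (hm : 5 ≤ m) :
    ((Finset.Icc 1 (F m)).image covFib).card = 2 * m - 4 := by
  obtain ⟨m, rfl⟩ := Nat.exists_eq_add_of_le' (show 2 ≤ m by lia)
  have hsub (n : ℕ) : (Finset.Icc 2 n : Set ℕ) ⊆ Set.Ici 1 := fun k hk =>
    one_le_two.trans (Finset.mem_Icc.1 hk).1
  rw [image_covFib_Icc_F (by lia),
    Finset.card_union_of_disjoint (disjoint_image_F_sub_one_image_two_mul_F_sub_one _ _),
    Finset.card_image_of_injOn (F_sub_one_injOn.mono (hsub _)),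
    Finset.card_image_of_injOn (two_mul_F_sub_one_injOn.mono (hsub _)), Nat.card_Icc, Nat.card_Icc]
  lia
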